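/- Let E be a Banach space, T > 0, and let K be a Volterra kernel on [0,T] satisfying Condition (A) with exponent α ∈ [0, 1/4). If ψ: [0,T]² → E is strongly λ-Hölder bi-continuous with λ > α, then ∫_{[0,T]²} ‖(K*⊗K*)ψ(u,v)‖_E⁴ du dv < ∞ and ∫_0^T ‖(K*⊗K*)ψ(r,r)‖_E² dr < ∞. -/

import Mathlib

/-! Condition (A) and the Hölder bounds combine to singularities of order `δ - 1`, `δ = λ - α > 0`,
in the integrals defining `A` and `B`, which are therefore bounded on the open square, as is `ψ`.
Only the factors `K(T,·)` are unbounded, so `‖(K*⊗K*)ψ(u,v)‖ ≤ M w(u) w(v)` with the weight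
`w(u) = max 1 (u^(-α) (T-u)^(-α))`. The power `w^p` is integrable, like a Beta integrand, as soon
as `p α < 1`; on the diagonal the bound is `M w²`, which halves the admissible exponent. -/

open MeasureTheory Set

noncomputable section

namespace YS

variable {E : Type*} [NormedAddCommGroup E] [NormedSpace ℝ E]

/-- A Volterra kernel: a measurable `K : ℝ² → ℝ` with `K t s = 0` whenever `s ≥ t`. -/
def IsVolterraKernel (K : ℝ → ℝ → ℝ) : Prop :=
  Measurable (Function.uncurry K) ∧ ∀ t s : ℝ, t ≤ s → K t s = 0

/-- Condition (A) with exponent `α` and constant `C`; here `K' t s` denotes the partial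
derivative `∂K(t,s)/∂t`, whose existence is part of the condition. -/
def CondA (T α C : ℝ) (K K' : ℝ → ℝ → ℝ) : Prop :=
  (∀ s t : ℝ, 0 < s → s < t → t ≤ T → |K t s| ≤ C * s ^ (-α) * (t - s) ^ (-α)) ∧
  ∀ s t : ℝ, 0 < s → s < t → t ≤ T →
    HasDerivAt (fun r => K r s) (K' t s) t ∧ |K' t s| ≤ C * (t - s) ^ (-(α + 1))

/-- The operator `𝒦*`:  `(𝒦*φ)(s) = φ(s)K(T,s) + ∫_s^T [φ(r) − φ(s)] ∂K(r,s)/∂r dr`. -/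
def Kstar (T : ℝ) (K K' : ℝ → ℝ → ℝ) (φ : ℝ → E) (s : ℝ) : E :=
  K T s • φ s + ∫ r in s..T, K' r s • (φ r - φ s)

/-- The operator `A^K`. -/
def AK (T : ℝ) (K' : ℝ → ℝ → ℝ) (φ : ℝ → E) (s : ℝ) : E :=
  ∫ r in s..T, K' r s • (φ r - φ s)

/-- Rectangular increment `f(u₁,u₂;v₁,v₂)`. -/
def rectInc (ψ : ℝ → ℝ → E) (u₁ u₂ v₁ v₂ : ℝ) : E :=
  ψ u₁ v₁ + ψ u₂ v₂ - ψ u₁ v₂ - ψ u₂ v₁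

/-- The operator `B^K`. -/
def BK (T : ℝ) (K' : ℝ → ℝ → ℝ) (ψ : ℝ → ℝ → E) (u v : ℝ) : E :=
  ∫ r₂ in v..T, ∫ r₁ in u..T, (K' r₁ u * K' r₂ v) • rectInc ψ u r₁ v r₂

/-- The operator `𝒦* ⊗ 𝒦*`. -/
def KstarT (T : ℝ) (K K' : ℝ → ℝ → ℝ) (ψ : ℝ → ℝ → E) (u v : ℝ) : E :=
  (K T u * K T v) • ψ u v + K T v • AK T K' (fun x => ψ x v) u +
    K T u • AK T K' (fun y => ψ u y) v + BK T K' ψ u v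

/-- A partition `0 = s₀ < s₁ < ⋯ < s_n = T` of `[0,T]`. -/
structure Partition (T : ℝ) where
  n : ℕ
  pts : ℕ → ℝ
  n_pos : 0 < n
  first : pts 0 = 0
  last : pts n = T
  lt : ∀ i < n, pts i < pts (i + 1)

/-- Mesh of a partition: the largest increment. -/
def Partition.mesh {T : ℝ} (P : Partition T) : ℝ :=
  (Finset.range P.n).sup' (Finset.nonempty_range_iff.mpr P.n_pos.ne')
    fun i => P.pts (i + 1) - P.pts i

/-- One-dimensional step approximation `φ^π`. -/
def step1 {T : ℝ} (P : Partition T) (φ : ℝ → E) (s : ℝ) : E :=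
  ∑ i ∈ Finset.range P.n,
    (Set.Ico (P.pts i) (P.pts (i + 1))).indicator (fun _ => φ (P.pts i)) s

/-- Two-dimensional step approximation `ψ^π` for the grid partition `P × Q`. -/
def step2 {T : ℝ} (P Q : Partition T) (ψ : ℝ → ℝ → E) (u v : ℝ) : E :=
  ∑ i ∈ Finset.range P.n, ∑ j ∈ Finset.range Q.n,
    ((Set.Ico (P.pts i) (P.pts (i + 1))) ×ˢ (Set.Ico (Q.pts j) (Q.pts (j + 1)))).indicator
      (fun _ => ψ (P.pts i) (Q.pts j)) (u, v)

/-- `λ`-Hölder continuity on `[0,T]` with constant `C`. -/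
def IsHolderWith (T lam C : ℝ) (φ : ℝ → E) : Prop :=
  ∀ t₁ ∈ Icc (0:ℝ) T, ∀ t₂ ∈ Icc (0:ℝ) T, ‖φ t₁ - φ t₂‖ ≤ C * |t₁ - t₂| ^ lam

/-- `λ`-Hölder continuity on `[0,T]`. -/
def IsHolder (T lam : ℝ) (φ : ℝ → E) : Prop := ∃ C : ℝ, IsHolderWith T lam C φ

/-- `λ`-Hölder bi-continuity with constant `C`. -/
def IsHolderBiWith (T lam C : ℝ) (ψ : ℝ → ℝ → E) : Prop :=
  (∀ u₁ ∈ Icc (0:ℝ) T, ∀ u₂ ∈ Icc (0:ℝ) T, ∀ v ∈ Icc (0:ℝ) T,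
      ‖ψ u₂ v - ψ u₁ v‖ ≤ C * |u₂ - u₁| ^ lam) ∧
  ∀ u ∈ Icc (0:ℝ) T, ∀ v₁ ∈ Icc (0:ℝ) T, ∀ v₂ ∈ Icc (0:ℝ) T,
      ‖ψ u v₂ - ψ u v₁‖ ≤ C * |v₂ - v₁| ^ lam

/-- `λ`-Hölder bi-continuity. -/
def IsHolderBi (T lam : ℝ) (ψ : ℝ → ℝ → E) : Prop := ∃ C : ℝ, IsHolderBiWith T lam C ψ

/-- Strong `λ`-Hölder bi-continuity with constant `C`. -/
def IsStrongHolderBiWith (T lam C : ℝ) (ψ : ℝ → ℝ → E) : Prop :=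
  IsHolderBiWith T lam C ψ ∧
  ∀ u₁ ∈ Icc (0:ℝ) T, ∀ u₂ ∈ Icc (0:ℝ) T, ∀ v₁ ∈ Icc (0:ℝ) T, ∀ v₂ ∈ Icc (0:ℝ) T,
    ‖rectInc ψ u₁ u₂ v₁ v₂‖ ≤ C * |u₂ - u₁| ^ lam * |v₂ - v₁| ^ lam

/-- Strong `λ`-Hölder bi-continuity. -/
def IsStrongHolderBi (T lam : ℝ) (ψ : ℝ → ℝ → E) : Prop :=
  ∃ C : ℝ, IsStrongHolderBiWith T lam C ψ

/-- The covariance function `R(s,t) = ∫_0^{s∧t} K(t,r)K(s,r) dr` of the Volterra process. -/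
def covR (K : ℝ → ℝ → ℝ) (s t : ℝ) : ℝ := ∫ r in (0:ℝ)..(min s t), K t r * K s r

/-- The 2D Riemann–Stieltjes sum of `f` against `g` over the grid partition `P × Q`. -/
def RSsum {T : ℝ} (P Q : Partition T) (f g : ℝ → ℝ → ℝ) : ℝ :=
  ∑ i ∈ Finset.range P.n, ∑ j ∈ Finset.range Q.n,
    f (P.pts i) (Q.pts j) *
      rectInc g (P.pts i) (P.pts (i + 1)) (Q.pts j) (Q.pts (j + 1))

section Integrals

variable {G X Y : Type*} [NormedAddCommGroup G] [MeasurableSpace X] [MeasurableSpace Y]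
  {μ : Measure X} {ν : Measure Y}

theorem lintegral_enorm_rpow_lt_top_of_norm_rpow_le {F : X → G} {g : X → ℝ} {p : ℝ} (hp : 0 ≤ p)
    (hg : Integrable g μ) (hF : ∀ᵐ x ∂μ, ‖F x‖ ^ p ≤ g x) : ∫⁻ x, ‖F x‖ₑ ^ p ∂μ < ⊤ := by
  have hfin : HasFiniteIntegral (fun x => ‖F x‖ ^ p) μ := by
    refine hg.hasFiniteIntegral.mono' (hF.mono fun x hx => ?_)
    rwa [Real.norm_of_nonneg (by positivity)]
  simpa only [HasFiniteIntegral, Real.enorm_rpow_of_nonneg (norm_nonneg _) hp, enorm_norm]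
    using hfin

theorem lintegral_lintegral_enorm_rpow_lt_top_of_norm_rpow_le {F : X → Y → G} {f : X → ℝ}
    {g : Y → ℝ} {p : ℝ} (hp : 0 ≤ p) (hf : Integrable f μ) (hg : Integrable g ν)
    (hF : ∀ᵐ x ∂μ, ∀ᵐ y ∂ν, ‖F x y‖ ^ p ≤ f x * g y) :
    ∫⁻ x, ∫⁻ y, ‖F x y‖ₑ ^ p ∂ν ∂μ < ⊤ := by
  have hle : ∀ x y, ‖F x y‖ ^ p ≤ f x * g y → ‖F x y‖ₑ ^ p ≤ ‖f x‖ₑ * ‖g y‖ₑ := by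
    intro x y h
    rw [← enorm_mul, ← enorm_norm (F x y), ← Real.enorm_rpow_of_nonneg (norm_nonneg _) hp]
    refine enorm_le_iff_norm_le.2 ?_
    rw [Real.norm_of_nonneg (by positivity)]
    exact h.trans (le_abs_self _)
  calc ∫⁻ x, ∫⁻ y, ‖F x y‖ₑ ^ p ∂ν ∂μ
      ≤ ∫⁻ x, ∫⁻ y, ‖f x‖ₑ * ‖g y‖ₑ ∂ν ∂μ :=
        lintegral_mono_ae <| hF.mono fun x hx => lintegral_mono_ae <| hx.mono fun y => hle x y
    _ = (∫⁻ x, ‖f x‖ₑ ∂μ) * ∫⁻ y, ‖g y‖ₑ ∂ν :=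
        lintegral_lintegral_mul hf.aestronglyMeasurable.enorm hg.aestronglyMeasurable.enorm
    _ < ⊤ := ENNReal.mul_lt_top hf.hasFiniteIntegral hg.hasFiniteIntegral

theorem norm_intervalIntegral_le_of_norm_le_mul_sub_rpow {F : ℝ → E} {a b c δ : ℝ} (hab : a ≤ b)
    (hδ : 0 < δ) (hF : ∀ r ∈ Ioc a b, ‖F r‖ ≤ c * (r - a) ^ (δ - 1)) :
    ‖∫ r in a..b, F r‖ ≤ c * ((b - a) ^ δ / δ) := by
  have hint : IntervalIntegrable (fun r => (r - a) ^ (δ - 1)) volume a b := by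
    simpa only [zero_add, sub_add_cancel] using (intervalIntegral.intervalIntegrable_rpow'
      (a := 0) (b := b - a) (show -1 < δ - 1 by linarith)).comp_sub_right a
  calc ‖∫ r in a..b, F r‖ ≤ ∫ r in a..b, c * (r - a) ^ (δ - 1) :=
        intervalIntegral.norm_integral_le_of_norm_le hab (.of_forall hF) (hint.const_mul c)
    _ = c * ((b - a) ^ δ / δ) := by
        rw [intervalIntegral.integral_const_mul,
          intervalIntegral.integral_comp_sub_right (fun x : ℝ => x ^ (δ - 1)) a,
          integral_rpow (Or.inl (by linarith)), sub_self, sub_add_cancel,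
          Real.zero_rpow hδ.ne', sub_zero]

theorem intervalIntegrable_rpow_mul_sub_rpow {a b T : ℝ} (hT : 0 < T) (ha : -1 < a)
    (hb : -1 < b) : IntervalIntegrable (fun x => x ^ a * (T - x) ^ b) volume 0 T := by
  have left_half : ∀ {a : ℝ} (b : ℝ), -1 < a →
      IntervalIntegrable (fun x => x ^ a * (T - x) ^ b) volume 0 (T / 2) := by
    intro a b ha
    refine (intervalIntegral.intervalIntegrable_rpow' ha).mul_continuousOn fun x hx => ?_
    rw [uIcc_of_le (by positivity)] at hx
    have hxT : T - x ≠ 0 := by linarith [hx.2]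
    exact (ContinuousAt.rpow_const (by fun_prop) (.inl hxT)).continuousWithinAt
  have right_half : IntervalIntegrable (fun x => x ^ a * (T - x) ^ b) volume (T / 2) T := by
    simpa only [sub_sub_cancel, sub_zero, sub_half, mul_comm]
      using ((left_half a hb).comp_sub_left T).symm
  exact (left_half b ha).trans right_half

end Integrals

section EndpointWeight

/-- The weight `w(u) = max 1 (u^(-α) (T-u)^(-α))`, which dominates both the constants and the bound
of Condition (A) on `K(T,u)`. -/
def endpointWeight (T α u : ℝ) : ℝ := max 1 (u ^ (-α) * (T - u) ^ (-α))

theorem one_le_endpointWeight (T α u : ℝ) : 1 ≤ endpointWeight T α u := le_max_left _ _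

theorem endpointWeight_nonneg (T α u : ℝ) : 0 ≤ endpointWeight T α u :=
  zero_le_one.trans (one_le_endpointWeight T α u)

theorem endpointWeight_rpow {T u p : ℝ} (α : ℝ) (hp : 0 ≤ p) (hu : u ∈ Ioo 0 T) :
    endpointWeight T α u ^ p = max 1 (u ^ (-α * p) * (T - u) ^ (-α * p)) := by
  have hu₀ : 0 ≤ u := hu.1.le
  have huT : 0 ≤ T - u := sub_nonneg.2 hu.2.le
  rw [endpointWeight, Real.rpow_max zero_le_one (by positivity) hp, Real.one_rpow,
    Real.mul_rpow (by positivity) (by positivity), ← Real.rpow_mul hu₀, ← Real.rpow_mul huT]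

theorem integrableOn_endpointWeight_rpow {T α p : ℝ} (hT : 0 < T) (hp : 0 ≤ p)
    (hpα : p * α < 1) : IntegrableOn (fun u => endpointWeight T α u ^ p) (Ioo 0 T) := by
  have hbeta : IntegrableOn (fun u => u ^ (-α * p) * (T - u) ^ (-α * p)) (Ioo 0 T) :=
    (intervalIntegrable_iff_integrableOn_Ioo_of_le hT.le).1
      (intervalIntegrable_rpow_mul_sub_rpow hT (by linarith) (by linarith))
  have hone : IntegrableOn (fun _ : ℝ => (1 : ℝ)) (Ioo 0 T) :=
    integrableOn_const measure_Ioo_lt_top.ne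
  exact IntegrableOn.congr_fun (hone.sup hbeta) (fun u hu => (endpointWeight_rpow α hp hu).symm)
    measurableSet_Ioo

end EndpointWeight

section HolderBounds

variable {G : Type*} [NormedAddCommGroup G] {T lam D : ℝ}

theorem IsHolderWith.nonneg {φ : ℝ → G} (hφ : IsHolderWith T lam D φ) (hT : 0 < T) : 0 ≤ D := by
  have h := (norm_nonneg _).trans (hφ T ⟨hT.le, le_rfl⟩ 0 ⟨le_rfl, hT.le⟩)
  rw [sub_zero, abs_of_pos hT] at h
  exact nonneg_of_mul_nonneg_left h (Real.rpow_pos_of_pos hT _)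

theorem IsHolderWith.norm_le {φ : ℝ → G} (hφ : IsHolderWith T lam D φ) (hT : 0 < T)
    (hlam : 0 ≤ lam) {t : ℝ} (ht : t ∈ Icc 0 T) : ‖φ t‖ ≤ ‖φ 0‖ + D * T ^ lam := by
  have hD := hφ.nonneg hT
  calc ‖φ t‖ ≤ ‖φ 0‖ + ‖φ t - φ 0‖ := norm_le_norm_add_norm_sub' _ _
    _ ≤ ‖φ 0‖ + D * |t - 0| ^ lam := by gcongr; exact hφ t ht 0 ⟨le_rfl, hT.le⟩
    _ ≤ ‖φ 0‖ + D * T ^ lam := by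
        rw [sub_zero, abs_of_nonneg ht.1]
        gcongr
        exacts [ht.1, ht.2]

variable {ψ : ℝ → ℝ → G}

theorem IsHolderBiWith.isHolderWith_left (hψ : IsHolderBiWith T lam D ψ) {v : ℝ}
    (hv : v ∈ Icc 0 T) : IsHolderWith T lam D (fun u => ψ u v) :=
  fun u₂ hu₂ u₁ hu₁ => hψ.1 u₁ hu₁ u₂ hu₂ v hv

theorem IsHolderBiWith.isHolderWith_right (hψ : IsHolderBiWith T lam D ψ) {u : ℝ}
    (hu : u ∈ Icc 0 T) : IsHolderWith T lam D (fun v => ψ u v) :=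
  fun v₂ hv₂ v₁ hv₁ => hψ.2 u hu v₁ hv₁ v₂ hv₂

theorem IsHolderBiWith.norm_le (hψ : IsHolderBiWith T lam D ψ) (hT : 0 < T) (hlam : 0 ≤ lam)
    {u v : ℝ} (hu : u ∈ Icc 0 T) (hv : v ∈ Icc 0 T) :
    ‖ψ u v‖ ≤ ‖ψ 0 0‖ + D * T ^ lam + D * T ^ lam :=
  ((hψ.isHolderWith_left hv).norm_le hT hlam hu).trans <|
    add_le_add_left ((hψ.isHolderWith_right ⟨le_rfl, hT.le⟩).norm_le hT hlam hv) _

end HolderBounds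

section OperatorBounds

variable {T α lam C D : ℝ} {K K' : ℝ → ℝ → ℝ}

theorem CondA.nonneg (hA : CondA T α C K K') (hT : 0 < T) : 0 ≤ C := by
  have h := (abs_nonneg _).trans (hA.2 (T / 2) T (by linarith) (by linarith) le_rfl).2
  exact nonneg_of_mul_nonneg_left h (Real.rpow_pos_of_pos (by linarith) _)

theorem CondA.abs_le_mul_endpointWeight (hA : CondA T α C K K') {u : ℝ} (hu : u ∈ Ioo 0 T) :
    |K T u| ≤ C * endpointWeight T α u := by
  have hC := hA.nonneg (hu.1.trans hu.2)
  calc |K T u| ≤ C * (u ^ (-α) * (T - u) ^ (-α)) := by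
        simpa only [mul_assoc] using hA.1 u T hu.1 hu.2 le_rfl
    _ ≤ C * endpointWeight T α u := by gcongr; exact le_max_right _ _

theorem CondA.abs_deriv_mul_rpow_le (hA : CondA T α C K K') (lam : ℝ) {s r : ℝ} (hs : 0 < s)
    (hr : r ∈ Ioc s T) : |K' r s| * |r - s| ^ lam ≤ C * (r - s) ^ (lam - α - 1) := by
  have hsr : 0 < r - s := sub_pos.2 hr.1
  calc |K' r s| * |r - s| ^ lam ≤ C * (r - s) ^ (-(α + 1)) * (r - s) ^ lam := by
        rw [abs_of_pos hsr]
        gcongr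
        exact (hA.2 s r hs hr.1 hr.2).2
    _ = C * (r - s) ^ (lam - α - 1) := by
        rw [mul_assoc, ← Real.rpow_add hsr]
        ring_nf

theorem norm_AK_le (hA : CondA T α C K K') {φ : ℝ → E} (hφ : IsHolderWith T lam D φ)
    (hαlam : α < lam) {u : ℝ} (hu : u ∈ Ioo 0 T) :
    ‖AK T K' φ u‖ ≤ D * C * (T ^ (lam - α) / (lam - α)) := by
  have hT := hu.1.trans hu.2
  have hC := hA.nonneg hT
  have hD := hφ.nonneg hT
  have hδ : 0 < lam - α := sub_pos.2 hαlam
  have hpoint : ∀ r ∈ Ioc u T, ‖K' r u • (φ r - φ u)‖ ≤ D * C * (r - u) ^ (lam - α - 1) := by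
    intro r hr
    calc ‖K' r u • (φ r - φ u)‖ ≤ |K' r u| * (D * |r - u| ^ lam) := by
          rw [norm_smul, Real.norm_eq_abs]
          gcongr
          exact hφ r ⟨(hu.1.trans hr.1).le, hr.2⟩ u (Ioo_subset_Icc_self hu)
      _ = D * (|K' r u| * |r - u| ^ lam) := by ring
      _ ≤ D * (C * (r - u) ^ (lam - α - 1)) := by
          gcongr D * ?_
          exact hA.abs_deriv_mul_rpow_le lam hu.1 hr
      _ = D * C * (r - u) ^ (lam - α - 1) := by ring
  calc ‖AK T K' φ u‖ ≤ D * C * ((T - u) ^ (lam - α) / (lam - α)) :=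
        norm_intervalIntegral_le_of_norm_le_mul_sub_rpow hu.2.le hδ hpoint
    _ ≤ D * C * (T ^ (lam - α) / (lam - α)) := by
        gcongr
        exacts [sub_nonneg.2 hu.2.le, sub_le_self T hu.1.le]

variable {ψ : ℝ → ℝ → E}

theorem norm_smul_rectInc_le (hA : CondA T α C K K') (hψ : IsStrongHolderBiWith T lam D ψ)
    {u v r₁ r₂ : ℝ} (hu : 0 < u) (hv : 0 < v) (hr₁ : r₁ ∈ Ioc u T) (hr₂ : r₂ ∈ Ioc v T) :
    ‖(K' r₁ u * K' r₂ v) • rectInc ψ u r₁ v r₂‖ ≤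
      D * (C * (r₁ - u) ^ (lam - α - 1)) * (C * (r₂ - v) ^ (lam - α - 1)) := by
  have hT : 0 < T := hu.trans (hr₁.1.trans_le hr₁.2)
  have hD := (hψ.1.isHolderWith_left (v := 0) ⟨le_rfl, hT.le⟩).nonneg hT
  have hC := hA.nonneg hT
  have hru : 0 ≤ r₁ - u := sub_nonneg.2 hr₁.1.le
  calc ‖(K' r₁ u * K' r₂ v) • rectInc ψ u r₁ v r₂‖
      ≤ |K' r₁ u| * |K' r₂ v| * (D * |r₁ - u| ^ lam * |r₂ - v| ^ lam) := by
        rw [norm_smul, Real.norm_eq_abs, abs_mul]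
        gcongr
        exact hψ.2 u ⟨hu.le, hr₁.1.le.trans hr₁.2⟩ r₁ ⟨(hu.trans hr₁.1).le, hr₁.2⟩
          v ⟨hv.le, hr₂.1.le.trans hr₂.2⟩ r₂ ⟨(hv.trans hr₂.1).le, hr₂.2⟩
    _ = D * (|K' r₁ u| * |r₁ - u| ^ lam) * (|K' r₂ v| * |r₂ - v| ^ lam) := by ring
    _ ≤ D * (C * (r₁ - u) ^ (lam - α - 1)) * (C * (r₂ - v) ^ (lam - α - 1)) := by
        gcongr D * ?_ * ?_
        exacts [hA.abs_deriv_mul_rpow_le lam hu hr₁, hA.abs_deriv_mul_rpow_le lam hv hr₂]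

theorem norm_BK_le (hA : CondA T α C K K') (hψ : IsStrongHolderBiWith T lam D ψ)
    (hαlam : α < lam) {u v : ℝ} (hu : u ∈ Ioo 0 T) (hv : v ∈ Ioo 0 T) :
    ‖BK T K' ψ u v‖ ≤ D * (C * (T ^ (lam - α) / (lam - α))) ^ 2 := by
  have hT := hu.1.trans hu.2
  have hD := (hψ.1.isHolderWith_left (Ioo_subset_Icc_self hv)).nonneg hT
  have hδ : 0 < lam - α := sub_pos.2 hαlam
  have hTu : 0 ≤ T - u := sub_nonneg.2 hu.2.le
  have hTv : 0 ≤ T - v := sub_nonneg.2 hv.2.le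
  have hinner : ∀ r₂ ∈ Ioc v T, ‖∫ r₁ in u..T, (K' r₁ u * K' r₂ v) • rectInc ψ u r₁ v r₂‖ ≤
      D * C ^ 2 * ((T - u) ^ (lam - α) / (lam - α)) * (r₂ - v) ^ (lam - α - 1) := by
    intro r₂ hr₂
    exact (norm_intervalIntegral_le_of_norm_le_mul_sub_rpow
      (c := D * C ^ 2 * (r₂ - v) ^ (lam - α - 1)) hu.2.le hδ fun r₁ hr₁ =>
        (norm_smul_rectInc_le hA hψ hu.1 hv.1 hr₁ hr₂).trans_eq (by ring)).trans_eq (by ring)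
  calc ‖BK T K' ψ u v‖
      ≤ D * C ^ 2 * ((T - u) ^ (lam - α) / (lam - α)) * ((T - v) ^ (lam - α) / (lam - α)) :=
        norm_intervalIntegral_le_of_norm_le_mul_sub_rpow hv.2.le hδ hinner
    _ ≤ D * C ^ 2 * (T ^ (lam - α) / (lam - α)) * (T ^ (lam - α) / (lam - α)) := by
        gcongr
        exacts [sub_le_self T hu.1.le, sub_le_self T hv.1.le]
    _ = D * (C * (T ^ (lam - α) / (lam - α))) ^ 2 := by ring

theorem norm_KstarT_le (T : ℝ) (K K' : ℝ → ℝ → ℝ) (ψ : ℝ → ℝ → E) (u v : ℝ) :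
    ‖KstarT T K K' ψ u v‖ ≤ |K T u| * |K T v| * ‖ψ u v‖ + |K T v| * ‖AK T K' (fun x => ψ x v) u‖ +
      |K T u| * ‖AK T K' (fun y => ψ u y) v‖ + ‖BK T K' ψ u v‖ := by
  simpa only [KstarT, norm_smul, Real.norm_eq_abs, abs_mul] using norm_add₄_le
    (a := (K T u * K T v) • ψ u v) (b := K T v • AK T K' (fun x => ψ x v) u)
    (c := K T u • AK T K' (fun y => ψ u y) v) (d := BK T K' ψ u v)

theorem exists_norm_KstarT_le_mul_endpointWeight (hT : 0 < T) (hA : CondA T α C K K')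
    (hψ : IsStrongHolderBiWith T lam D ψ) (hlam : 0 ≤ lam) (hαlam : α < lam) :
    ∃ M, 0 ≤ M ∧ ∀ u ∈ Ioo 0 T, ∀ v ∈ Ioo 0 T,
      ‖KstarT T K K' ψ u v‖ ≤ M * (endpointWeight T α u * endpointWeight T α v) := by
  have hC := hA.nonneg hT
  have hD := (hψ.1.isHolderWith_left (v := 0) ⟨le_rfl, hT.le⟩).nonneg hT
  set N := ‖ψ 0 0‖ + D * T ^ lam + D * T ^ lam
  set A := D * C * (T ^ (lam - α) / (lam - α))
  set B := D * (C * (T ^ (lam - α) / (lam - α))) ^ 2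
  have hB₀ : 0 ≤ B := by positivity
  refine ⟨C * C * N + C * A + C * A + B, by positivity, fun u hu v hv => ?_⟩
  have hu' := Ioo_subset_Icc_self hu
  have hv' := Ioo_subset_Icc_self hv
  set a := endpointWeight T α u
  set b := endpointWeight T α v
  have ha : 1 ≤ a := one_le_endpointWeight T α u
  have hb : 1 ≤ b := one_le_endpointWeight T α v
  have ha₀ : 0 ≤ a := endpointWeight_nonneg T α u
  have hb₀ : 0 ≤ b := endpointWeight_nonneg T α v
  calc ‖KstarT T K K' ψ u v‖
      ≤ |K T u| * |K T v| * ‖ψ u v‖ + |K T v| * ‖AK T K' (fun x => ψ x v) u‖ +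
          |K T u| * ‖AK T K' (fun y => ψ u y) v‖ + ‖BK T K' ψ u v‖ := norm_KstarT_le ..
    _ ≤ C * a * (C * b) * N + C * b * A + C * a * A + B := by
        gcongr
        exacts [hA.abs_le_mul_endpointWeight hu, hA.abs_le_mul_endpointWeight hv,
          hψ.1.norm_le hT hlam hu' hv', hA.abs_le_mul_endpointWeight hv,
          norm_AK_le hA (hψ.1.isHolderWith_left hv') hαlam hu, hA.abs_le_mul_endpointWeight hu,
          norm_AK_le hA (hψ.1.isHolderWith_right hu') hαlam hv, norm_BK_le hA hψ hαlam hu hv]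
    _ ≤ C * a * (C * b) * N + C * (a * b) * A + C * (a * b) * A + B * (a * b) := by
        gcongr
        exacts [le_mul_of_one_le_left hb₀ ha, le_mul_of_one_le_right ha₀ hb,
          le_mul_of_one_le_right hB₀ (one_le_mul_of_one_le_of_one_le ha hb)]
    _ = (C * C * N + C * A + C * A + B) * (a * b) := by ring

end OperatorBounds

theorem kstarT_integrability_general {E : Type*} [NormedAddCommGroup E] [NormedSpace ℝ E]
    [CompleteSpace E] {T α lam p : ℝ} (hT : 0 < T) (hp : 0 ≤ p) (hpα : p * α < 1)
    {K K' : ℝ → ℝ → ℝ} (hA : ∃ C : ℝ, CondA T α C K K')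
    {ψ : ℝ → ℝ → E} (hlam : 0 ≤ lam) (hψ : IsStrongHolderBi T lam ψ) (hαlam : α < lam) :
    (∫⁻ u in Icc (0:ℝ) T, ∫⁻ v in Icc (0:ℝ) T, ‖KstarT T K K' ψ u v‖ₑ ^ p) < ⊤ ∧
    (∫⁻ r in Icc (0:ℝ) T, ‖KstarT T K K' ψ r r‖ₑ ^ (p / 2)) < ⊤ := by
  obtain ⟨C, hA⟩ := hA
  obtain ⟨D, hψ⟩ := hψ
  obtain ⟨M, hM, hbound⟩ := exists_norm_KstarT_le_mul_endpointWeight hT hA hψ hlam hαlam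
  have hw := integrableOn_endpointWeight_rpow hT hp hpα
  have hw₀ := endpointWeight_nonneg T α
  rw [← restrict_Ioo_eq_restrict_Icc]
  constructor
  · refine lintegral_lintegral_enorm_rpow_lt_top_of_norm_rpow_le hp (hw.const_mul (M ^ p)) hw
      (ae_restrict_of_forall_mem measurableSet_Ioo fun u hu =>
        ae_restrict_of_forall_mem measurableSet_Ioo fun v hv => ?_)
    calc ‖KstarT T K K' ψ u v‖ ^ p ≤ (M * (endpointWeight T α u * endpointWeight T α v)) ^ p :=
          Real.rpow_le_rpow (norm_nonneg _) (hbound u hu v hv) hp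
      _ = M ^ p * endpointWeight T α u ^ p * endpointWeight T α v ^ p := by
          rw [Real.mul_rpow hM (mul_nonneg (hw₀ u) (hw₀ v)), Real.mul_rpow (hw₀ u) (hw₀ v),
            mul_assoc]
  · have hp2 : 0 ≤ p / 2 := by positivity
    refine lintegral_enorm_rpow_lt_top_of_norm_rpow_le hp2 (hw.const_mul (M ^ (p / 2)))
      (ae_restrict_of_forall_mem measurableSet_Ioo fun r hr => ?_)
    calc ‖KstarT T K K' ψ r r‖ ^ (p / 2)
        ≤ (M * (endpointWeight T α r * endpointWeight T α r)) ^ (p / 2) :=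
          Real.rpow_le_rpow (norm_nonneg _) (hbound r hr r hr) hp2
      _ = M ^ (p / 2) * endpointWeight T α r ^ p := by
          rw [Real.mul_rpow hM (mul_nonneg (hw₀ r) (hw₀ r)), Real.mul_rpow (hw₀ r) (hw₀ r),
            ← Real.rpow_add_of_nonneg (hw₀ r) hp2 hp2, add_halves]

/-- Lemma 3.7: integrability of `(𝒦*⊗𝒦*)ψ`: its fourth power is
integrable on `[0,T]²` and the square of its diagonal is integrable on `[0,T]`. -/
theorem kstarT_integrability {E : Type*} [NormedAddCommGroup E] [NormedSpace ℝ E]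
    [CompleteSpace E] (T α lam : ℝ) (hT : 0 < T) (hα : 0 ≤ α) (hα' : α < 1 / 4)
    (K K' : ℝ → ℝ → ℝ) (hK : IsVolterraKernel K) (hA : ∃ C : ℝ, CondA T α C K K')
    (ψ : ℝ → ℝ → E) (hlam : 0 < lam) (hlam' : lam ≤ 1)
    (hψ : IsStrongHolderBi T lam ψ) (hαlam : α < lam) :
    (∫⁻ u in Icc (0:ℝ) T, ∫⁻ v in Icc (0:ℝ) T,
        (‖KstarT T K K' ψ u v‖₊ : ENNReal) ^ 4) < ⊤ ∧
    (∫⁻ r in Icc (0:ℝ) T, (‖KstarT T K K' ψ r r‖₊ : ENNReal) ^ 2) < ⊤ := by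
  simpa [enorm_eq_nnnorm, show (4 / 2 : ℝ) = 2 by norm_num] using
    kstarT_integrability_general (p := 4) hT (by norm_num) (by linarith) hA hlam.le hψ hαlam

end YS
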